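/- (Hardy inequality, the case of Example 3.1 for a hyperplane through the base point.) Let n ≥ 3. For every smooth compactly supported function φ : ℝⁿ → ℝ one has ∫_{ℝⁿ} ‖∇φ(x)‖² dx ≥ ((n−2)²/4) · ∫_{ℝⁿ} φ(x)²/‖x‖² dx. -/

import Mathlib

open MeasureTheory

lemma hardy_int_fderiv_zero {n : ℕ} (G : EuclideanSpace ℝ (Fin n) → ℝ)
    (hG : ContDiff ℝ 1 G) (hc : HasCompactSupport G) (v : EuclideanSpace ℝ (Fin n)) :
    Integrable (fun x => fderiv ℝ G x v) ∧ ∫ x, fderiv ℝ G x v = 0 := by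
  have hi : Integrable (fun x => fderiv ℝ G x v) := by
    apply Continuous.integrable_of_hasCompactSupport
    · exact (hG.continuous_fderiv one_ne_zero).clm_apply continuous_const
    · exact hc.fderiv_apply ℝ v
  refine ⟨hi, ?_⟩
  have h := integral_mul_fderiv_eq_neg_fderiv_mul_of_integrable (μ := volume)
    (f := fun _ : EuclideanSpace ℝ (Fin n) => (1 : ℝ)) (g := G) (v := v)
    (by simp) (by simpa using hi)
    (by simpa using hG.continuous.integrable_of_hasCompactSupport hc)
    (fun x _ => by fun_prop) (fun x _ => (hG.differentiable one_ne_zero) x)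
  simpa using h

lemma hardy_deriv {n : ℕ} (φ : EuclideanSpace ℝ (Fin n) → ℝ) (hφ : Differentiable ℝ φ)
    (ε : ℝ) (hε : 0 < ε) (x : EuclideanSpace ℝ (Fin n)) (i : Fin n) :
    fderiv ℝ (fun y : EuclideanSpace ℝ (Fin n) => φ y ^ 2 * y i * (‖y‖ ^ 2 + ε)⁻¹) x
      (EuclideanSpace.single i 1) =
    2 * φ x * (fderiv ℝ φ x (EuclideanSpace.single i 1) * x i) * (‖x‖ ^ 2 + ε)⁻¹
      + φ x ^ 2 * ((‖x‖ ^ 2 + ε)⁻¹ - 2 * x i ^ 2 * ((‖x‖ ^ 2 + ε)⁻¹) ^ 2) := by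
  have hs : ‖x‖ ^ 2 + ε ≠ 0 := by positivity
  have h1 : HasFDerivAt φ (fderiv ℝ φ x) x := (hφ x).hasFDerivAt
  have h2 : HasFDerivAt (fun y : EuclideanSpace ℝ (Fin n) => y i)
    (EuclideanSpace.proj (𝕜 := ℝ) i : EuclideanSpace ℝ (Fin n) →L[ℝ] ℝ) x :=
    (EuclideanSpace.proj (𝕜 := ℝ) i : EuclideanSpace ℝ (Fin n) →L[ℝ] ℝ).hasFDerivAt
  have h3 : HasFDerivAt (fun y : EuclideanSpace ℝ (Fin n) => ‖y‖ ^ 2 + ε)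
    (2 • (innerSL ℝ x)) x := (hasStrictFDerivAt_norm_sq x).hasFDerivAt.add_const ε
  have h4 := (hasDerivAt_inv hs).comp_hasFDerivAt x h3
  have h5 := ((h1.pow 2).mul h2).mul h4
  have h6 : fderiv ℝ (fun y : EuclideanSpace ℝ (Fin n) => φ y ^ 2 * y i * (‖y‖ ^ 2 + ε)⁻¹) x = _ :=
    h5.fderiv
  rw [h6]
  simp [EuclideanSpace.inner_single_right]
  field_simp
  ring

lemma hardy_eps (n : ℕ) (hn : 3 ≤ n)
    (φ : EuclideanSpace ℝ (Fin n) → ℝ)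
    (hφ : ContDiff ℝ (⊤ : ℕ∞) φ) (hφc : HasCompactSupport φ) (ε : ℝ) (hε : 0 < ε) :
    ((n : ℝ) - 2) ^ 2 / 4 * ∫ x, φ x ^ 2 / (‖x‖ ^ 2 + ε) ≤ ∫ x, ‖gradient φ x‖ ^ 2 := by
  have hφ1 : ContDiff ℝ 1 φ := hφ.of_le (by exact_mod_cast le_top)
  have hn' : (3 : ℝ) ≤ n := by exact_mod_cast hn
  have hd : Differentiable ℝ φ := hφ1.differentiable one_ne_zero
  have hs : ∀ x : EuclideanSpace ℝ (Fin n), ‖x‖ ^ 2 + ε ≠ 0 := fun x => by positivity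
  have key : ∀ i : Fin n, _ := fun i => hardy_int_fderiv_zero
    (fun y : EuclideanSpace ℝ (Fin n) => φ y ^ 2 * y i * (‖y‖ ^ 2 + ε)⁻¹)
    (by
      have : ContDiff ℝ 1 (fun y : EuclideanSpace ℝ (Fin n) => y i) :=
        (EuclideanSpace.proj (𝕜 := ℝ) i : EuclideanSpace ℝ (Fin n) →L[ℝ] ℝ).contDiff
      exact ((hφ1.pow 2).mul this).mul (((contDiff_norm_sq ℝ).add contDiff_const).inv hs))
    (by
      refine hφc.mono ?_
      intro x hx
      contrapose! hx
      simp at hx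
      simp [hx])
    (EuclideanSpace.single i 1)
  have hsum : ∀ x, ∑ i : Fin n,
      fderiv ℝ (fun y : EuclideanSpace ℝ (Fin n) => φ y ^ 2 * y i * (‖y‖ ^ 2 + ε)⁻¹) x
      (EuclideanSpace.single i 1) = 2 * φ x * (fderiv ℝ φ x x) * (‖x‖ ^ 2 + ε)⁻¹
      + φ x ^ 2 * (n * (‖x‖ ^ 2 + ε)⁻¹ - 2 * ‖x‖ ^ 2 * ((‖x‖ ^ 2 + ε)⁻¹) ^ 2) := by
    intro x
    simp_rw [hardy_deriv φ hd ε hε]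
    have e1 : fderiv ℝ φ x x = ∑ i, fderiv ℝ φ x (EuclideanSpace.single i 1) * x i := by
      generalize fderiv ℝ φ x = L
      conv_lhs => rw [← (EuclideanSpace.basisFun (Fin n) ℝ).sum_repr x]
      simp [mul_comm]
    rw [e1, EuclideanSpace.real_norm_sq_eq]
    simp only [Finset.sum_add_distrib, ← Finset.mul_sum, ← Finset.sum_mul, Finset.sum_sub_distrib]
    simp
  have hI : Integrable (fun x => 2 * φ x * (fderiv ℝ φ x x) * (‖x‖ ^ 2 + ε)⁻¹
      + φ x ^ 2 * (n * (‖x‖ ^ 2 + ε)⁻¹ - 2 * ‖x‖ ^ 2 * ((‖x‖ ^ 2 + ε)⁻¹) ^ 2)) := by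
    simp_rw [← hsum]
    exact integrable_finsetSum _ fun i _ => (key i).1
  have hZ : ∫ x, (2 * φ x * (fderiv ℝ φ x x) * (‖x‖ ^ 2 + ε)⁻¹
      + φ x ^ 2 * (n * (‖x‖ ^ 2 + ε)⁻¹ - 2 * ‖x‖ ^ 2 * ((‖x‖ ^ 2 + ε)⁻¹) ^ 2)) = 0 := by
    simp_rw [← hsum]
    rw [integral_finsetSum _ fun i _ => (key i).1]
    exact Finset.sum_eq_zero fun i _ => (key i).2
  have hA : Integrable (fun x => φ x ^ 2 / (‖x‖ ^ 2 + ε)) := by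
    apply Continuous.integrable_of_hasCompactSupport
    · exact (hφ1.continuous.pow 2).div (by fun_prop) hs
    · refine hφc.mono ?_
      intro x hx
      contrapose! hx
      simp at hx
      simp [hx]
  have hgn : ∀ x, ‖gradient φ x‖ = ‖fderiv ℝ φ x‖ := fun x => by simp [gradient]
  have hB : Integrable (fun x => ‖gradient φ x‖ ^ 2) := by
    simp_rw [hgn]
    apply Continuous.integrable_of_hasCompactSupport
    · exact ((hφ1.continuous_fderiv one_ne_zero).norm).pow 2
    · refine (hφc.fderiv ℝ).mono ?_
      intro x hx
      contrapose! hx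
      simp at hx
      simp [hx]
  have hC := hI.const_mul (-(((n : ℝ) - 2) / 2))
  have : ∫ x, (((n : ℝ) - 2) ^ 2 / 4 * (φ x ^ 2 / (‖x‖ ^ 2 + ε)) + (-(((n : ℝ) - 2) / 2)) *
      (2 * φ x * (fderiv ℝ φ x x) * (‖x‖ ^ 2 + ε)⁻¹
      + φ x ^ 2 * (n * (‖x‖ ^ 2 + ε)⁻¹ - 2 * ‖x‖ ^ 2 * ((‖x‖ ^ 2 + ε)⁻¹) ^ 2)))
      ≤ ∫ x, ‖gradient φ x‖ ^ 2 := by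
    refine integral_mono ((hA.const_mul _).add hC) hB ?_
    intro x
    have hsp : 0 < ‖x‖ ^ 2 + ε := by positivity
    have hin : fderiv ℝ φ x x = inner ℝ (gradient φ x) x := by simp [gradient]
    have hsq := norm_add_sq_real (gradient φ x)
      ((((n : ℝ) - 2) / 2 * φ x * (‖x‖ ^ 2 + ε)⁻¹) • x)
    rw [inner_smul_right, norm_smul, mul_pow, Real.norm_eq_abs, sq_abs, ← hin] at hsq
    have h0 := sq_nonneg ‖gradient φ x + (((n : ℝ) - 2) / 2 * φ x * (‖x‖ ^ 2 + ε)⁻¹) • x‖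
    rw [hsq] at h0
    have hw : 0 < (‖x‖ ^ 2 + ε)⁻¹ := by positivity
    have hr : ‖x‖ ^ 2 * (‖x‖ ^ 2 + ε)⁻¹ ≤ 1 := by
      rw [← div_eq_mul_inv, div_le_one hsp]
      linarith
    simp only [div_eq_mul_inv (φ x ^ 2)]
    generalize (‖x‖ ^ 2 + ε)⁻¹ = w at *
    generalize ‖x‖ ^ 2 = r at *
    have ha : 0 ≤ (n : ℝ) - 2 := by linarith
    have hm : 0 ≤ (((n : ℝ) - 2) + ((n : ℝ) - 2) ^ 2 / 4) * (φ x ^ 2 * w * (1 - r * w)) := by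
      have : 0 ≤ 1 - r * w := by linarith
      positivity
    nlinarith [h0, hm]
  rwa [integral_add (hA.const_mul _) hC, integral_const_mul, integral_const_mul, hZ, mul_zero,
    add_zero] at this

theorem hardy_inequality (n : ℕ) (hn : 3 ≤ n)
    (φ : EuclideanSpace ℝ (Fin n) → ℝ)
    (hφ : ContDiff ℝ (⊤ : ℕ∞) φ) (hφc : HasCompactSupport φ) :
    ((n : ℝ) - 2) ^ 2 / 4 * ∫ x, φ x ^ 2 / ‖x‖ ^ 2 ≤ ∫ x, ‖gradient φ x‖ ^ 2 := by
  by_cases hint : Integrable (fun x => φ x ^ 2 / ‖x‖ ^ 2)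
  swap
  · rw [integral_undef hint, mul_zero]
    exact integral_nonneg fun x => by positivity
  have : Nonempty (Fin n) := ⟨⟨0, by omega⟩⟩
  have hne : ∀ᵐ x : EuclideanSpace ℝ (Fin n), x ≠ 0 := by
    simp [ae_iff]
  have hlim : Filter.Tendsto (fun k : ℕ => ∫ x, φ x ^ 2 / (‖x‖ ^ 2 + 1 / ((k : ℝ) + 1)))
      Filter.atTop (nhds (∫ x, φ x ^ 2 / ‖x‖ ^ 2)) := by
    apply tendsto_integral_of_dominated_convergence (fun x => φ x ^ 2 / ‖x‖ ^ 2)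
    · intro k
      refine (Continuous.div (hφ.continuous.pow 2) (by fun_prop) ?_).aestronglyMeasurable
      intro x
      positivity
    · exact hint
    · intro k
      filter_upwards [hne] with x hx
      have hx' : 0 < ‖x‖ := norm_pos_iff.2 hx
      rw [Real.norm_of_nonneg (by positivity)]
      gcongr
      have : (0 : ℝ) ≤ 1 / ((k : ℝ) + 1) := by positivity
      linarith
    · filter_upwards [hne] with x hx
      have hx' : 0 < ‖x‖ := norm_pos_iff.2 hx
      refine Filter.Tendsto.div tendsto_const_nhds ?_ (by positivity)
      simpa using tendsto_const_nhds.add (tendsto_one_div_add_atTop_nhds_zero_nat (𝕜 := ℝ))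
  exact le_of_tendsto (hlim.const_mul _) (Filter.Eventually.of_forall fun k =>
    hardy_eps n hn φ hφ hφc _ (by positivity))
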